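/- Let n ≥ 2, let ξ be a real number with 1 ≤ ξ ≤ n−1, and let C ∈ ℝ^{n×n} be symmetric with nonnegative entries and C_ij = 0 iff i = j. Suppose P^{se} ∈ H_ξ ∩ S has all entries positive and there exist γ ∈ ℝⁿ with all entries positive, λ ∈ ℝⁿ, and Γ ∈ ℝ^{n×n} such that C_ij + γ_i log P^{se}_ij − λ_i + Γ_ij − Γ_ji = 0 for all i, j, and γ_i (H(P^{se}_{i:}) − (log ξ + 1)) = 0 for all i. Then for every σ with 0 < σ ≤ min_i γ_i, setting K_σ = (exp(−C_ij/σ))_{ij}, the matrix P^{se} is the unique minimizer of P ↦ KL(P|K_σ) over H_ξ ∩ S. -/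

import Mathlib

open Finset

/-- Entropy of a nonnegative vector, with the convention `0 * log 0 = 0`. -/
noncomputable def ent {n : ℕ} (p : Fin n → ℝ) : ℝ :=
  -∑ i, p i * (Real.log (p i) - 1)

/-- Membership in the set `H_ξ`. -/
def Hxi {n : ℕ} (ξ : ℝ) (P : Fin n → Fin n → ℝ) : Prop :=
  (∀ i j, 0 ≤ P i j) ∧ (∀ i, ∑ j, P i j = 1) ∧ (∀ i, Real.log ξ + 1 ≤ ent (P i))

/-- Kullback–Leibler divergence, with the convention `0 * log 0 = 0`. -/
noncomputable def klDiv {n : ℕ} (P K : Fin n → Fin n → ℝ) : ℝ :=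
  ∑ i, ∑ j, P i j * (Real.log (P i j / K i j) - 1)

/-!
`σ KL(P | K_σ)` is the entropic transport cost `∑ C_ij P_ij - σ ∑ H(P_i)`. The stationarity
equation rewrites the cost of a symmetric perturbation `P - Pse` with zero row sums as
`-∑ γ_i ⟨P_i - Pse_i, log Pse_i⟩`: the row sums eliminate `lam` and the symmetry eliminates `Γ`.
As the Bregman divergence `D` of `-H` is the Kullback-Leibler divergence,
`σ (KL(P | K_σ) - KL(Pse | K_σ)) = ∑ (γ_i D(P_i, Pse_i) + (γ_i - σ) (H(P_i) - H(Pse_i)))`.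
Complementary slackness makes `H(Pse_i)` the smallest admissible entropy, so the second term is
nonnegative for `σ ≤ γ_i`, and a Pythagorean inequality for `D` follows.
-/

open InformationTheory (klFun klFun_apply klFun_zero klFun_nonneg klFun_eq_zero_iff)

section RelEntropy

variable {ι : Type*} [Fintype ι] {p q : ι → ℝ}

/-- Kullback-Leibler divergence of nonnegative vectors that need not be normalised, so that it is
nonnegative without any condition on the total masses. It is meant for `q` with positive entries
only. -/
noncomputable def relEntropy (p q : ι → ℝ) : ℝ :=
  ∑ i, q i * klFun (p i / q i)

lemma mul_klFun_div_nonneg {x y : ℝ} (hx : 0 ≤ x) (hy : 0 ≤ y) : 0 ≤ y * klFun (x / y) :=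
  mul_nonneg hy (klFun_nonneg (div_nonneg hx hy))

lemma relEntropy_nonneg (hp : ∀ i, 0 ≤ p i) (hq : ∀ i, 0 ≤ q i) : 0 ≤ relEntropy p q :=
  sum_nonneg fun i _ => mul_klFun_div_nonneg (hp i) (hq i)

lemma relEntropy_eq_zero_iff (hp : ∀ i, 0 ≤ p i) (hq : ∀ i, 0 < q i) :
    relEntropy p q = 0 ↔ p = q := by
  have hterm : ∀ i, q i * klFun (p i / q i) = 0 ↔ p i = q i := fun i => by
    rw [mul_eq_zero_iff_left (hq i).ne', klFun_eq_zero_iff (div_nonneg (hp i) (hq i).le),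
      div_eq_one_iff_eq (hq i).ne']
  rw [relEntropy, sum_eq_zero_iff_of_nonneg fun i _ =>
    mul_klFun_div_nonneg (hp i) (hq i).le]
  simp only [mem_univ, forall_const, hterm, funext_iff]

end RelEntropy

lemma mul_klFun_div {x y : ℝ} (hy : y ≠ 0) :
    y * klFun (x / y) = x * (Real.log x - Real.log y) + y - x := by
  rcases eq_or_ne x 0 with rfl | hx
  · simp [klFun_zero]
  · rw [klFun_apply, Real.log_div hx hy]
    field_simp

lemma mul_mul_log_div_exp_neg_div {σ : ℝ} (hσ : σ ≠ 0) (x c : ℝ) :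
    σ * (x * (Real.log (x / Real.exp (-c / σ)) - 1)) = x * c + σ * (x * (Real.log x - 1)) := by
  rcases eq_or_ne x 0 with rfl | hx
  · simp only [zero_mul, mul_zero, add_zero]
  · rw [Real.log_div hx (Real.exp_ne_zero _), Real.log_exp]
    field_simp
    ring

lemma sum_sum_mul_sub_swap_eq_zero {ι R : Type*} [Fintype ι] [NonUnitalNonAssocRing R]
    {S : ι → ι → R} (hS : ∀ i j, S i j = S j i) (Γ : ι → ι → R) :
    ∑ i, ∑ j, S i j * (Γ i j - Γ j i) = 0 := by
  have hswap : ∑ i, ∑ j, S i j * Γ i j = ∑ i, ∑ j, S i j * Γ j i := by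
    rw [sum_comm]
    simp only [hS]
  simp only [mul_sub, sum_sub_distrib, hswap, sub_self]

/-- The Gibbs kernel `K_σ = exp (-C / σ)` of the cost matrix `C` at temperature `σ`. -/
noncomputable def gibbsKernel {n : ℕ} (σ : ℝ) (C : Fin n → Fin n → ℝ) : Fin n → Fin n → ℝ :=
  fun i j => Real.exp (-C i j / σ)

lemma relEntropy_eq_ent_sub_ent_sub_sum {n : ℕ} {q : Fin n → ℝ} (p : Fin n → ℝ)
    (hq : ∀ i, q i ≠ 0) :
    relEntropy p q = ent q - ent p - ∑ i, (p i - q i) * Real.log (q i) := by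
  simp only [relEntropy, ent, mul_klFun_div (hq _), neg_sub_neg, ← sum_sub_distrib]
  exact sum_congr rfl fun i _ => by ring

lemma mul_klDiv_gibbsKernel {n : ℕ} {σ : ℝ} (hσ : σ ≠ 0) (C P : Fin n → Fin n → ℝ) :
    σ * klDiv P (gibbsKernel σ C) = ∑ i, ∑ j, P i j * C i j - σ * ∑ i, ent (P i) := by
  simp only [klDiv, gibbsKernel, ent, mul_sum, mul_mul_log_div_exp_neg_div hσ,
    sum_add_distrib, sum_neg_distrib, mul_neg, sub_neg_eq_add]

section Stationary

variable {n : ℕ} {C P Q Γ : Fin n → Fin n → ℝ} {γ lam : Fin n → ℝ} {σ : ℝ}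

lemma sum_sum_sub_mul_cost_of_stationary
    (hsum : ∀ i, ∑ j, P i j = ∑ j, Q i j) (hsymm : ∀ i j, P i j - Q i j = P j i - Q j i)
    (hstat : ∀ i j, C i j + γ i * Real.log (Q i j) - lam i + Γ i j - Γ j i = 0) :
    ∑ i, ∑ j, (P i j - Q i j) * C i j =
      -∑ i, γ i * ∑ j, (P i j - Q i j) * Real.log (Q i j) := by
  have hlam : ∑ i, ∑ j, (P i j - Q i j) * lam i = 0 := by
    simp only [← sum_mul, sum_sub_distrib, hsum, sub_self, zero_mul, sum_const_zero]
  have hΓ : ∑ i, ∑ j, (P i j - Q i j) * (Γ i j - Γ j i) = 0 :=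
    sum_sum_mul_sub_swap_eq_zero hsymm Γ
  have hcost : ∀ i j, (P i j - Q i j) * C i j = (P i j - Q i j) * lam i -
      (P i j - Q i j) * (Γ i j - Γ j i) - γ i * ((P i j - Q i j) * Real.log (Q i j)) :=
    fun i j => by linear_combination (P i j - Q i j) * hstat i j
  simp only [hcost, sum_sub_distrib, ← mul_sum] at hlam hΓ ⊢
  rw [hlam, hΓ, sub_zero, zero_sub]

lemma mul_klDiv_sub_mul_klDiv_of_stationary
    (hσ : σ ≠ 0) (hQ₀ : ∀ i j, Q i j ≠ 0) (hsum : ∀ i, ∑ j, P i j = ∑ j, Q i j)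
    (hsymm : ∀ i j, P i j - Q i j = P j i - Q j i)
    (hstat : ∀ i j, C i j + γ i * Real.log (Q i j) - lam i + Γ i j - Γ j i = 0) :
    σ * klDiv P (gibbsKernel σ C) - σ * klDiv Q (gibbsKernel σ C) =
      ∑ i, (γ i * relEntropy (P i) (Q i) + (γ i - σ) * (ent (P i) - ent (Q i))) := by
  calc
    _ = ∑ i, ∑ j, (P i j - Q i j) * C i j - σ * ∑ i, (ent (P i) - ent (Q i)) := by
      simp only [mul_klDiv_gibbsKernel hσ, sub_mul, sum_sub_distrib]
      ring
    _ = ∑ i, (-(γ i * ∑ j, (P i j - Q i j) * Real.log (Q i j)) -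
          σ * (ent (P i) - ent (Q i))) := by
      rw [sum_sum_sub_mul_cost_of_stationary hsum hsymm hstat, mul_sum,
        ← sum_neg_distrib, ← sum_sub_distrib]
    _ = _ := sum_congr rfl fun i _ => by
      rw [relEntropy_eq_ent_sub_ent_sub_sum (P i) (hQ₀ i)]
      ring

lemma klDiv_add_sum_relEntropy_le_of_stationary
    (hσ : 0 < σ) (hσγ : ∀ i, σ ≤ γ i) (hP₀ : ∀ i j, 0 ≤ P i j) (hQ₀ : ∀ i j, 0 < Q i j)
    (hsum : ∀ i, ∑ j, P i j = ∑ j, Q i j)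
    (hsymm : ∀ i j, P i j - Q i j = P j i - Q j i)
    (hent : ∀ i, ent (Q i) ≤ ent (P i))
    (hstat : ∀ i j, C i j + γ i * Real.log (Q i j) - lam i + Γ i j - Γ j i = 0) :
    klDiv Q (gibbsKernel σ C) + ∑ i, relEntropy (P i) (Q i) ≤ klDiv P (gibbsKernel σ C) := by
  have hrow : ∀ i, σ * relEntropy (P i) (Q i) ≤
      γ i * relEntropy (P i) (Q i) + (γ i - σ) * (ent (P i) - ent (Q i)) := fun i =>
    le_add_of_le_of_nonneg
      (mul_le_mul_of_nonneg_right (hσγ i) (relEntropy_nonneg (hP₀ i) fun j => (hQ₀ i j).le))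
      (mul_nonneg (sub_nonneg.2 (hσγ i)) (sub_nonneg.2 (hent i)))
  have hscaled : σ * ∑ i, relEntropy (P i) (Q i) ≤
      σ * klDiv P (gibbsKernel σ C) - σ * klDiv Q (gibbsKernel σ C) := by
    rw [mul_klDiv_sub_mul_klDiv_of_stationary hσ.ne' (fun i j => (hQ₀ i j).ne') hsum hsymm hstat,
      mul_sum]
    exact sum_le_sum fun i _ => hrow i
  exact le_of_mul_le_mul_left (by linarith) hσ

end Stationary

theorem sea_as_KL_projection_general
    {n : ℕ} {C P Pse Γ : Fin n → Fin n → ℝ} {γ lam : Fin n → ℝ} {σ : ℝ}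
    (hσ : 0 < σ) (hσγ : ∀ i, σ ≤ γ i) (hP₀ : ∀ i j, 0 ≤ P i j) (hPse₀ : ∀ i j, 0 < Pse i j)
    (hsum : ∀ i, ∑ j, P i j = ∑ j, Pse i j)
    (hsymm : ∀ i j, P i j - Pse i j = P j i - Pse j i)
    (hent : ∀ i, ent (Pse i) ≤ ent (P i))
    (hstat : ∀ i j, C i j + γ i * Real.log (Pse i j) - lam i + Γ i j - Γ j i = 0) :
    klDiv Pse (gibbsKernel σ C) ≤ klDiv P (gibbsKernel σ C) ∧
      (klDiv P (gibbsKernel σ C) = klDiv Pse (gibbsKernel σ C) → P = Pse) := by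
  have hpyth := klDiv_add_sum_relEntropy_le_of_stationary hσ hσγ hP₀ hPse₀ hsum hsymm hent hstat
  have hrel : ∀ i ∈ univ, 0 ≤ relEntropy (P i) (Pse i) :=
    fun i _ => relEntropy_nonneg (hP₀ i) fun j => (hPse₀ i j).le
  refine ⟨(le_add_of_nonneg_right (sum_nonneg hrel)).trans hpyth, fun heq => ?_⟩
  have hzero : ∑ i, relEntropy (P i) (Pse i) = 0 :=
    le_antisymm (by linarith [hpyth, heq]) (sum_nonneg hrel)
  funext i
  exact (relEntropy_eq_zero_iff (hP₀ i) (hPse₀ i)).1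
    ((sum_eq_zero_iff_of_nonneg hrel).1 hzero i (mem_univ i))

theorem sea_as_KL_projection
    {n : ℕ} (hn : 2 ≤ n) (ξ : ℝ) (hξ1 : 1 ≤ ξ) (hξ2 : ξ ≤ (n : ℝ) - 1)
    (C : Fin n → Fin n → ℝ) (hCsym : ∀ i j, C i j = C j i)
    (hCnn : ∀ i j, 0 ≤ C i j) (hCzero : ∀ i j, C i j = 0 ↔ i = j)
    (Pse : Fin n → Fin n → ℝ) (hPse : Hxi ξ Pse) (hPsym : ∀ i j, Pse i j = Pse j i)
    (hPpos : ∀ i j, 0 < Pse i j)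
    (γ : Fin n → ℝ) (hγ : ∀ i, 0 < γ i) (lam : Fin n → ℝ) (Γ : Fin n → Fin n → ℝ)
    (hstat : ∀ i j, C i j + γ i * Real.log (Pse i j) - lam i + Γ i j - Γ j i = 0)
    (hslack : ∀ i, γ i * (ent (Pse i) - (Real.log ξ + 1)) = 0)
    (σ : ℝ) (hσ0 : 0 < σ) (hσ : ∀ i, σ ≤ γ i) :
    let Kσ : Fin n → Fin n → ℝ := fun i j => Real.exp (-C i j / σ)
    (∀ P, Hxi ξ P → (∀ i j, P i j = P j i) → klDiv Pse Kσ ≤ klDiv P Kσ) ∧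
      (∀ P, Hxi ξ P → (∀ i j, P i j = P j i) →
        klDiv P Kσ = klDiv Pse Kσ → P = Pse) := by
  intro Kσ
  have hent : ∀ P, Hxi ξ P → ∀ i, ent (Pse i) ≤ ent (P i) := fun P hP i =>
    (sub_eq_zero.1 ((mul_eq_zero.1 (hslack i)).resolve_left (hγ i).ne')).trans_le (hP.2.2 i)
  have hproj := fun P (hP : Hxi ξ P) (hPsymm : ∀ i j, P i j = P j i) =>
    sea_as_KL_projection_general hσ0 hσ hP.1 hPpos
      (fun i => (hP.2.1 i).trans (hPse.2.1 i).symm)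
      (fun i j => congrArg₂ (· - ·) (hPsymm i j) (hPsym i j)) (hent P hP) hstat
  exact ⟨fun P hP hs => (hproj P hP hs).1, fun P hP hs => (hproj P hP hs).2⟩
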